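/- Let E be a centered ellipsoid in ℝⁿ with semiaxes a₁,…,aₙ > 0. For every real number i with −2 < i < 0, Ṽ_i(E) = (4π^{n/2} / (n Γ((n−i)/2) Γ(i/2))) · ∫₀^∞ u^{i−1} · ( ((1 + u²/a₁²)⋯(1 + u²/aₙ²))^{−1/2} − 1 ) du, where Γ(i/2) is the value of the Gamma function extended to negative non-integer arguments via Γ(z) = Γ(z+1)/z. -/

import Mathlib

open MeasureTheory Real Set

noncomputable def sphereMeasure (n : ℕ) :
    Measure (Metric.sphere (0 : EuclideanSpace ℝ (Fin n)) 1) :=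
  (volume : Measure (EuclideanSpace ℝ (Fin n))).toSphere

noncomputable def radial {n : ℕ} (K : Set (EuclideanSpace ℝ (Fin n)))
    (x : EuclideanSpace ℝ (Fin n)) : ℝ :=
  sSup {t : ℝ | 0 ≤ t ∧ t • x ∈ K}

noncomputable def dualVolume (n : ℕ) (i : ℝ) (K : Set (EuclideanSpace ℝ (Fin n))) : ℝ :=
  (1 / n) * ∫ θ : Metric.sphere (0 : EuclideanSpace ℝ (Fin n)) 1,
    radial K (θ : EuclideanSpace ℝ (Fin n)) ^ i ∂(sphereMeasure n)

def ellipsoidSet {n : ℕ} (a : Fin n → ℝ) : Set (EuclideanSpace ℝ (Fin n)) :=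
  {x | ∑ j, (x j) ^ 2 / (a j) ^ 2 ≤ 1}

/-!
For `-2 < i < 0` and `Q ≥ 0`, integration by parts gives the regularised Gamma integral
`∫₀^∞ u^(i-1) (exp(-Q u²) - 1) du = ½ Γ(i/2) Q^(-i/2)`: subtracting `1` makes the integrand
integrable at `0`, and the boundary terms vanish in this range of `i`. If `Q` is the quadratic form
of the ellipsoid, then `Q^(-i/2) = ρ_E^i`, which is homogeneous of degree `-i`. Integrate the
identity over `ℝⁿ` against `exp(-|x|²)`. In polar coordinates the right-hand side is
`¼ Γ(i/2) Γ((n-i)/2) ∫ ρ_E^i dθ`, and on the left-hand side Fubini leaves the difference of two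
diagonal Gaussian integrals, `π^(n/2) (∏ (1 + u²/aⱼ²)^(-1/2) - 1)`.
-/

section PowerExponential

open Filter Topology

variable {p q b : ℝ}

lemma abs_exp_neg_sub_one_le {y : ℝ} (hy : 0 ≤ y) : |exp (-y) - 1| ≤ y := by
  rw [abs_of_nonpos (sub_nonpos.2 (exp_le_one_iff.2 (neg_nonpos.2 hy)))]
  linarith [one_sub_le_exp_neg y]

lemma abs_exp_neg_sub_one_le_one {y : ℝ} (hy : 0 ≤ y) : |exp (-y) - 1| ≤ 1 := by
  rw [abs_of_nonpos (sub_nonpos.2 (exp_le_one_iff.2 (neg_nonpos.2 hy)))]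
  linarith [exp_pos (-y)]

lemma integrableOn_rpow_mul_exp_neg_mul_rpow_sub_one (hq : -p - 1 < q) (hq' : q < -1)
    (hb : 0 ≤ b) : IntegrableOn (fun x ↦ x ^ q * (exp (-b * x ^ p) - 1)) (Ioi 0) := by
  have hcont : ContinuousOn (fun x : ℝ ↦ exp (-b * x ^ p) - 1) (Ioi 0) := by
    have := continuousOn_id.rpow_const (s := Ioi (0 : ℝ)) (p := p) fun x hx ↦ .inl hx.ne'
    fun_prop
  have htop : (fun x : ℝ ↦ exp (-b * x ^ p) - 1) =O[atTop] (· ^ (-0 : ℝ)) := by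
    refine Asymptotics.IsBigO.of_bound 1 ?_
    filter_upwards [eventually_gt_atTop 0] with x hx
    simpa using abs_exp_neg_sub_one_le_one (mul_nonneg hb (rpow_nonneg hx.le p))
  have hbot : (fun x : ℝ ↦ exp (-b * x ^ p) - 1) =O[𝓝[>] 0] (· ^ (-(-p))) := by
    refine Asymptotics.IsBigO.of_bound b ?_
    filter_upwards [self_mem_nhdsWithin] with x (hx : 0 < x)
    have hxp : 0 ≤ x ^ p := rpow_nonneg hx.le p
    simpa [abs_of_nonneg hxp] using abs_exp_neg_sub_one_le (mul_nonneg hb hxp)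
  simpa using mellin_convergent_of_isBigO_scalar (s := q + 1)
    (hcont.locallyIntegrableOn measurableSet_Ioi) htop (by linarith) hbot (by linarith)

lemma tendsto_rpow_mul_exp_neg_mul_rpow_sub_one_nhdsGT_zero (hq : -p < q) (hb : 0 ≤ b) :
    Tendsto (fun x ↦ x ^ q * (exp (-b * x ^ p) - 1)) (𝓝[>] 0) (𝓝 0) := by
  have hlim : Tendsto (fun x : ℝ ↦ b * x ^ (q + p)) (𝓝[>] 0) (𝓝 0) := by
    have hpow : ContinuousAt (fun x : ℝ ↦ b * x ^ (q + p)) 0 :=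
      (continuousAt_rpow_const 0 (q + p) (.inr (by linarith))).const_mul b
    simpa [ContinuousAt, zero_rpow (by linarith : q + p ≠ 0)] using hpow.tendsto.mono_left
      nhdsWithin_le_nhds
  refine squeeze_zero_norm' ?_ hlim
  filter_upwards [self_mem_nhdsWithin] with x (hx : 0 < x)
  calc ‖x ^ q * (exp (-b * x ^ p) - 1)‖ = x ^ q * |exp (-b * x ^ p) - 1| := by
        rw [norm_mul, norm_of_nonneg (by positivity), norm_eq_abs]
    _ ≤ x ^ q * (b * x ^ p) := by
        rw [neg_mul]
        gcongr
        exact abs_exp_neg_sub_one_le (by positivity)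
    _ = b * x ^ (q + p) := by rw [rpow_add hx]; ring

lemma tendsto_rpow_mul_exp_neg_mul_rpow_sub_one_atTop (hq : q < 0) (hb : 0 ≤ b) :
    Tendsto (fun x ↦ x ^ q * (exp (-b * x ^ p) - 1)) atTop (𝓝 0) := by
  have hlim : Tendsto (fun x : ℝ ↦ x ^ q) atTop (𝓝 0) := by
    simpa using tendsto_rpow_neg_atTop (y := -q) (by linarith)
  refine squeeze_zero_norm' ?_ hlim
  filter_upwards [eventually_gt_atTop 0] with x hx
  rw [norm_mul, norm_of_nonneg (by positivity), neg_mul]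
  exact mul_le_of_le_one_right (by positivity) (abs_exp_neg_sub_one_le_one (by positivity))

lemma add_one_mul_integral_rpow_mul_exp_neg_mul_rpow_sub_one (hp : 0 < p) (hq : -p - 1 < q)
    (hq' : q < -1) (hb : 0 < b) :
    (q + 1) * ∫ x in Ioi (0 : ℝ), x ^ q * (exp (-b * x ^ p) - 1) =
      b * p * ∫ x in Ioi (0 : ℝ), x ^ (q + p) * exp (-b * x ^ p) := by
  have hpow (x : ℝ) (hx : x ∈ Ioi 0) : HasDerivAt (· ^ (q + 1)) ((q + 1) * x ^ q) x := by
    simpa using hasDerivAt_rpow_const (p := q + 1) (.inl hx.ne')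
  have hexp (x : ℝ) (hx : x ∈ Ioi 0) : HasDerivAt (fun x ↦ exp (-b * x ^ p) - 1)
      (exp (-b * x ^ p) * (-b * (p * x ^ (p - 1)))) x :=
    (((hasDerivAt_rpow_const (.inl hx.ne')).const_mul (-b)).exp).sub_const 1
  have hmul_exp : EqOn
      (fun x : ℝ ↦ x ^ (q + 1) * (exp (-b * x ^ p) * (-b * (p * x ^ (p - 1)))))
      (fun x ↦ -(b * p) * (x ^ (q + p) * exp (-b * x ^ p))) (Ioi 0) := fun x hx ↦ by
    have hadd : x ^ (q + 1) * x ^ (p - 1) = x ^ (q + p) := by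
      rw [← rpow_add hx, show q + 1 + (p - 1) = q + p by ring]
    linear_combination -(b * p) * exp (-b * x ^ p) * hadd
  have hpow_mul : EqOn (fun x : ℝ ↦ (q + 1) * x ^ q * (exp (-b * x ^ p) - 1))
      (fun x ↦ (q + 1) * (x ^ q * (exp (-b * x ^ p) - 1))) (Ioi 0) := fun x _ ↦ mul_assoc _ _ _
  have hint := (integrableOn_rpow_mul_exp_neg_mul_rpow (s := q + p) (by linarith) hp hb).const_mul
    (-(b * p))
  have hint' := (integrableOn_rpow_mul_exp_neg_mul_rpow_sub_one hq hq' hb.le).const_mul (q + 1)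
  have hparts := integral_Ioi_mul_deriv_eq_deriv_mul hpow hexp
    ((integrableOn_congr_fun hmul_exp measurableSet_Ioi).2 hint)
    ((integrableOn_congr_fun hpow_mul measurableSet_Ioi).2 hint')
    (tendsto_rpow_mul_exp_neg_mul_rpow_sub_one_nhdsGT_zero (by linarith) hb.le)
    (tendsto_rpow_mul_exp_neg_mul_rpow_sub_one_atTop (by linarith) hb.le)
  rw [setIntegral_congr_fun measurableSet_Ioi hmul_exp,
    setIntegral_congr_fun measurableSet_Ioi hpow_mul, integral_const_mul, integral_const_mul]
    at hparts
  linarith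

lemma integral_rpow_mul_exp_neg_mul_rpow_sub_one_of_pos (hp : 0 < p) (hq : -p - 1 < q)
    (hq' : q < -1) (hb : 0 < b) :
    ∫ x in Ioi (0 : ℝ), x ^ q * (exp (-b * x ^ p) - 1) =
      b ^ (-(q + 1) / p) * (1 / p) * Gamma ((q + 1) / p) := by
  have hq₀ : q + 1 ≠ 0 := by linarith
  have hGamma : Gamma ((q + p + 1) / p) = (q + 1) / p * Gamma ((q + 1) / p) := by
    rw [← Gamma_add_one (div_ne_zero hq₀ hp.ne'), add_right_comm, add_div, div_self hp.ne']
  have hbpow : b * b ^ (-(q + p + 1) / p) = b ^ (-(q + 1) / p) := by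
    rw [mul_comm, ← rpow_add_one hb.ne']
    congr 1
    field_simp
    ring
  apply mul_left_cancel₀ hq₀
  rw [add_one_mul_integral_rpow_mul_exp_neg_mul_rpow_sub_one hp hq hq' hb,
    integral_rpow_mul_exp_neg_mul_rpow hp (by linarith) hb, hGamma, ← hbpow]
  field_simp

lemma integral_rpow_mul_exp_neg_mul_rpow_sub_one (hp : 0 < p) (hq : -p - 1 < q) (hq' : q < -1)
    (hb : 0 ≤ b) :
    ∫ x in Ioi (0 : ℝ), x ^ q * (exp (-b * x ^ p) - 1) =
      b ^ (-(q + 1) / p) * (1 / p) * Gamma ((q + 1) / p) := by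
  rcases hb.eq_or_lt with rfl | hb
  · have hexponent : -(q + 1) / p ≠ 0 := div_ne_zero (by linarith) hp.ne'
    simp only [zero_rpow hexponent, neg_zero, zero_mul, exp_zero, sub_self, mul_zero,
      integral_zero]
  · exact integral_rpow_mul_exp_neg_mul_rpow_sub_one_of_pos hp hq hq' hb

end PowerExponential

section Polar

open Metric Module

variable {F : Type*} [NormedAddCommGroup F] [NormedSpace ℝ F]

lemma integral_volumeIoiPow (k : ℕ) (g : ℝ → F) :
    ∫ r : Ioi (0 : ℝ), g r ∂(.volumeIoiPow k) = ∫ r in Ioi (0 : ℝ), r ^ k • g r := by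
  rw [Measure.volumeIoiPow, integral_withDensity_eq_integral_toReal_smul (by fun_prop) (by simp),
    integral_subtype_comap measurableSet_Ioi fun r : ℝ ↦ (ENNReal.ofReal (r ^ k)).toReal • g r]
  refine setIntegral_congr_fun measurableSet_Ioi fun r (hr : 0 < r) ↦ ?_
  simp only [ENNReal.toReal_ofReal (pow_nonneg hr.le k)]

lemma integrable_volumeIoiPow_iff {k : ℕ} {g : ℝ → F} :
    Integrable (fun r : Ioi (0 : ℝ) ↦ g r) (.volumeIoiPow k) ↔
      IntegrableOn (fun r ↦ r ^ k • g r) (Ioi 0) := by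
  rw [Measure.volumeIoiPow, integrable_withDensity_iff_integrable_smul' (by fun_prop) (by simp),
    integrableOn_iff_comap_subtypeVal measurableSet_Ioi]
  refine integrable_congr (.of_forall fun r ↦ ?_)
  simp only [ENNReal.toReal_ofReal (pow_nonneg r.2.out.le k), Function.comp_apply]

lemma pow_sub_one_mul_rpow_mul {d : ℕ} (hd : 0 < d) {r : ℝ} (hr : 0 < r) (s y : ℝ) :
    r ^ (d - 1) * (r ^ s * y) = r ^ (d - 1 + s) * y := by
  rw [rpow_add hr, ← mul_assoc, ← rpow_natCast, Nat.cast_sub hd, Nat.cast_one]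

variable {E : Type*} [NormedAddCommGroup E] [NormedSpace ℝ E]

lemma norm_smul_homeomorphUnitSphereProd (x : ({0}ᶜ : Set E)) :
    ((homeomorphUnitSphereProd E x).2 : ℝ) • ((homeomorphUnitSphereProd E x).1 : E) = x := by
  have hx : ‖(x : E)‖ ≠ 0 := norm_ne_zero_iff.2 x.2
  simp [smul_smul, hx]

lemma mul_norm_smul_of_homogeneous {f : E → ℝ} {s : ℝ}
    (hf : ∀ r > 0, ∀ x, f (r • x) = r ^ s * f x) (g : ℝ → ℝ)
    (z : sphere (0 : E) 1 × Ioi (0 : ℝ)) :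
    f ((z.2 : ℝ) • (z.1 : E)) * g ‖(z.2 : ℝ) • (z.1 : E)‖ =
      f z.1 * ((z.2 : ℝ) ^ s * g z.2) := by
  obtain ⟨θ, r, hr : 0 < r⟩ := z
  simp only [hf r hr, norm_smul, norm_of_nonneg hr.le, norm_eq_of_mem_sphere, mul_one]
  ring

variable [FiniteDimensional ℝ E] [Nontrivial E] [MeasurableSpace E] [BorelSpace E]
  (μ : Measure E) [μ.IsAddHaarMeasure]

lemma integral_eq_integral_sphere_prod_Ioi (f : E → F) :
    ∫ x, f x ∂μ = ∫ z : sphere (0 : E) 1 × Ioi (0 : ℝ), f ((z.2 : ℝ) • (z.1 : E))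
      ∂(μ.toSphere.prod (.volumeIoiPow (finrank ℝ E - 1))) := by
  rw [← μ.measurePreserving_homeomorphUnitSphereProd.integral_comp
      (Homeomorph.measurableEmbedding _)]
  simp only [norm_smul_homeomorphUnitSphereProd]
  rw [integral_subtype_comap (measurableSet_singleton _).compl f, restrict_compl_singleton]

lemma integrable_iff_integrable_sphere_prod_Ioi {F : Type*} [NormedAddCommGroup F]
    {f : E → F} :
    Integrable f μ ↔
      Integrable (fun z : sphere (0 : E) 1 × Ioi (0 : ℝ) ↦ f ((z.2 : ℝ) • (z.1 : E)))
        (μ.toSphere.prod (.volumeIoiPow (finrank ℝ E - 1))) := by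
  rw [← μ.measurePreserving_homeomorphUnitSphereProd.integrable_comp_emb
      (Homeomorph.measurableEmbedding _)]
  simp only [Function.comp_def, norm_smul_homeomorphUnitSphereProd]
  rw [← Function.comp_def f,
    ← integrableOn_iff_comap_subtypeVal (measurableSet_singleton _).compl, IntegrableOn,
    restrict_compl_singleton]

section Homogeneous

variable {μ} {f : E → ℝ} {s : ℝ} (hf : ∀ r > 0, ∀ x, f (r • x) = r ^ s * f x)

include hf

lemma integral_mul_norm_of_homogeneous (g : ℝ → ℝ) :
    ∫ x, f x * g ‖x‖ ∂μ = (∫ θ : sphere (0 : E) 1, f θ ∂μ.toSphere) *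
      ∫ r in Ioi (0 : ℝ), r ^ (finrank ℝ E - 1 + s) * g r := by
  rw [integral_eq_integral_sphere_prod_Ioi]
  simp only [mul_norm_smul_of_homogeneous hf]
  rw [integral_prod_mul (fun θ : sphere (0 : E) 1 ↦ f θ) fun r : Ioi (0 : ℝ) ↦ (r : ℝ) ^ s * g r,
    integral_volumeIoiPow _ fun r ↦ r ^ s * g r]
  congr 1
  exact setIntegral_congr_fun measurableSet_Ioi fun r hr ↦
    pow_sub_one_mul_rpow_mul finrank_pos hr s (g r)

lemma integrable_mul_norm_of_homogeneous {g : ℝ → ℝ}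
    (hfint : Integrable (fun θ : sphere (0 : E) 1 ↦ f θ) μ.toSphere)
    (hg : IntegrableOn (fun r ↦ r ^ (finrank ℝ E - 1 + s) * g r) (Ioi 0)) :
    Integrable (fun x ↦ f x * g ‖x‖) μ := by
  rw [integrable_iff_integrable_sphere_prod_Ioi]
  simp only [mul_norm_smul_of_homogeneous hf]
  have hradial : IntegrableOn (fun r ↦ r ^ (finrank ℝ E - 1) • (r ^ s * g r)) (Ioi 0) :=
    hg.congr_fun (fun r hr ↦ (pow_sub_one_mul_rpow_mul finrank_pos hr s (g r)).symm)
      measurableSet_Ioi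
  exact hfint.mul_prod (integrable_volumeIoiPow_iff.2 hradial)

lemma integral_mul_exp_neg_norm_sq_of_homogeneous (hs : 0 < finrank ℝ E + s) :
    ∫ x, f x * exp (-‖x‖ ^ 2) ∂μ =
      (∫ θ : sphere (0 : E) 1, f θ ∂μ.toSphere) * (1 / 2 * Gamma ((finrank ℝ E + s) / 2)) := by
  rw [integral_mul_norm_of_homogeneous hf fun r ↦ exp (-r ^ 2)]
  have hradial := integral_rpow_mul_exp_neg_rpow (p := 2) (q := finrank ℝ E - 1 + s) two_pos
    (by linarith)
  rw [show finrank ℝ E - 1 + s + 1 = finrank ℝ E + s by ring] at hradial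
  simp only [← hradial, rpow_two]

lemma integrable_mul_exp_neg_norm_sq_of_homogeneous (hs : 0 < finrank ℝ E + s)
    (hfint : Integrable (fun θ : sphere (0 : E) 1 ↦ f θ) μ.toSphere) :
    Integrable (fun x ↦ f x * exp (-‖x‖ ^ 2)) μ := by
  refine integrable_mul_norm_of_homogeneous hf (g := fun r ↦ exp (-r ^ 2)) hfint ?_
  simpa only [rpow_two] using
    integrableOn_rpow_mul_exp_neg_rpow (p := 2) (s := finrank ℝ E - 1 + s) (by linarith) two_pos

end Homogeneous

end Polar

section Subordination

variable {X : Type*} [MeasurableSpace X] {μ : Measure X} {φ w : X → ℝ} {p q : ℝ}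

lemma integrable_rpow_mul_exp_neg_mul_rpow_sub_one_mul (hp : 0 < p) (hq : -p - 1 < q)
    (hq' : q < -1) (hφ : ∀ x, 0 ≤ φ x) (hφm : Measurable φ) (hw : AEStronglyMeasurable w μ)
    (hint : Integrable (fun x ↦ φ x ^ (-(q + 1) / p) * w x) μ) :
    Integrable (fun z : X × ℝ ↦ z.2 ^ q * (exp (-φ z.1 * z.2 ^ p) - 1) * w z.1)
      (μ.prod (volume.restrict (Ioi 0))) := by
  have hmeas : Measurable fun z : X × ℝ ↦ z.2 ^ q * (exp (-φ z.1 * z.2 ^ p) - 1) := by fun_prop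
  refine (integrable_prod_iff (hmeas.aestronglyMeasurable.mul hw.comp_fst)).2
    ⟨.of_forall fun x ↦ ?_, ?_⟩
  · exact (integrableOn_rpow_mul_exp_neg_mul_rpow_sub_one hq hq' (hφ x)).mul_const (w x)
  have hnorm (x : X) :
      ∫ u in Ioi (0 : ℝ), ‖u ^ q * (exp (-φ x * u ^ p) - 1) * w x‖ =
        -(1 / p * Gamma ((q + 1) / p)) * ‖φ x ^ (-(q + 1) / p) * w x‖ := by
    have hsign : EqOn (fun u : ℝ ↦ ‖u ^ q * (exp (-φ x * u ^ p) - 1) * w x‖)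
        (fun u ↦ u ^ q * (exp (-φ x * u ^ p) - 1) * -|w x|) (Ioi 0) := fun u (hu : 0 < u) ↦ by
      have hexp : exp (-φ x * u ^ p) ≤ 1 := by
        rw [exp_le_one_iff, neg_mul, neg_nonpos]
        exact mul_nonneg (hφ x) (by positivity)
      have hfactor : u ^ q * (exp (-φ x * u ^ p) - 1) ≤ 0 :=
        mul_nonpos_of_nonneg_of_nonpos (by positivity) (sub_nonpos.2 hexp)
      change ‖u ^ q * (exp (-φ x * u ^ p) - 1) * w x‖ = _ * -|w x|
      rw [norm_mul, norm_of_nonpos hfactor, norm_eq_abs, neg_mul_comm]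
    rw [setIntegral_congr_fun measurableSet_Ioi hsign, integral_mul_const,
      integral_rpow_mul_exp_neg_mul_rpow_sub_one hp hq hq' (hφ x), norm_mul, norm_eq_abs (w x),
      norm_of_nonneg (rpow_nonneg (hφ x) _)]
    ring
  exact (hint.norm.const_mul _).congr (.of_forall fun x ↦ (hnorm x).symm)

theorem integral_rpow_mul_integral_exp_neg_mul_rpow_sub_one_mul [SFinite μ] (hp : 0 < p)
    (hq : -p - 1 < q) (hq' : q < -1) (hφ : ∀ x, 0 ≤ φ x) (hφm : Measurable φ)
    (hw : AEStronglyMeasurable w μ)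
    (hint : Integrable (fun x ↦ φ x ^ (-(q + 1) / p) * w x) μ) :
    ∫ u in Ioi (0 : ℝ), u ^ q * ∫ x, (exp (-φ x * u ^ p) - 1) * w x ∂μ =
      1 / p * Gamma ((q + 1) / p) * ∫ x, φ x ^ (-(q + 1) / p) * w x ∂μ := by
  calc ∫ u in Ioi (0 : ℝ), u ^ q * ∫ x, (exp (-φ x * u ^ p) - 1) * w x ∂μ
      = ∫ u in Ioi (0 : ℝ), ∫ x, u ^ q * (exp (-φ x * u ^ p) - 1) * w x ∂μ := by
        simp only [← integral_const_mul, mul_assoc]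
    _ = ∫ x, (∫ u in Ioi (0 : ℝ), u ^ q * (exp (-φ x * u ^ p) - 1) * w x) ∂μ :=
        (integral_integral_swap
          (integrable_rpow_mul_exp_neg_mul_rpow_sub_one_mul hp hq hq' hφ hφm hw hint)).symm
    _ = ∫ x, 1 / p * Gamma ((q + 1) / p) * (φ x ^ (-(q + 1) / p) * w x) ∂μ := by
        congr with x
        rw [integral_mul_const, integral_rpow_mul_exp_neg_mul_rpow_sub_one hp hq hq' (hφ x)]
        ring
    _ = 1 / p * Gamma ((q + 1) / p) * ∫ x, φ x ^ (-(q + 1) / p) * w x ∂μ :=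
        integral_const_mul _ _

end Subordination

section Gaussian

variable {ι : Type*} [Fintype ι] {b : ι → ℝ}

lemma exp_neg_sum_mul_sq (b v : ι → ℝ) :
    exp (-∑ j, b j * v j ^ 2) = ∏ j, exp (-b j * v j ^ 2) := by
  simp only [← exp_sum, ← Finset.sum_neg_distrib, neg_mul]

lemma integrable_exp_neg_sum_mul_sq (hb : ∀ j, 0 < b j) :
    Integrable fun x : EuclideanSpace ℝ ι ↦ exp (-∑ j, b j * x j ^ 2) := by
  rw [← (PiLp.volume_preserving_toLp ι).integrable_comp_emb
    (MeasurableEquiv.toLp 2 _).measurableEmbedding]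
  simp only [Function.comp_def, exp_neg_sum_mul_sq]
  exact Integrable.fintype_prod (f := fun j (v : ℝ) ↦ exp (-b j * v ^ 2))
    fun j ↦ integrable_exp_neg_mul_sq (hb j)

lemma integral_exp_neg_sum_mul_sq (hb : ∀ j, 0 < b j) :
    ∫ x : EuclideanSpace ℝ ι, exp (-∑ j, b j * x j ^ 2) =
      π ^ ((Fintype.card ι : ℝ) / 2) * (∏ j, b j) ^ (-(1 : ℝ) / 2) := by
  have hprod : 0 ≤ ∏ j, b j := Finset.prod_nonneg fun j _ ↦ (hb j).le
  calc ∫ x : EuclideanSpace ℝ ι, exp (-∑ j, b j * x j ^ 2)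
      = ∫ v : ι → ℝ, ∏ j, exp (-b j * v j ^ 2) := by
        rw [← (PiLp.volume_preserving_toLp ι).integral_comp
          (MeasurableEquiv.toLp 2 _).measurableEmbedding]
        simp only [exp_neg_sum_mul_sq]
    _ = ∏ j, √(π / b j) := by
        simp only [integral_fintype_prod_volume_eq_prod fun j (v : ℝ) ↦ exp (-b j * v ^ 2),
          integral_gaussian]
    _ = (π ^ Fintype.card ι / ∏ j, b j) ^ (1 / 2 : ℝ) := by
        simp only [sqrt_eq_rpow]
        rw [finsetProd_rpow _ _ fun j _ ↦ div_nonneg pi_pos.le (hb j).le, Finset.prod_div_distrib,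
          Finset.prod_const, Finset.card_univ]
    _ = π ^ ((Fintype.card ι : ℝ) / 2) * (∏ j, b j) ^ (-(1 : ℝ) / 2) := by
        rw [div_rpow (by positivity) hprod, ← rpow_natCast, ← rpow_mul pi_pos.le, mul_one_div,
          neg_div, rpow_neg hprod, div_eq_mul_inv]

end Gaussian

section Ellipsoid

variable {ι : Type*} [Fintype ι] {a : ι → ℝ}

/-- The quadratic form `∑ xⱼ² / aⱼ²` whose sublevel set at level `1` is the centered ellipsoid with
semiaxes `aⱼ`; it is the square of the Minkowski functional of the ellipsoid. -/
noncomputable def ellipsoidForm (a : ι → ℝ) (x : EuclideanSpace ℝ ι) : ℝ :=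
  ∑ j, x j ^ 2 / a j ^ 2

lemma continuous_ellipsoidForm (a : ι → ℝ) : Continuous (ellipsoidForm a) := by
  unfold ellipsoidForm
  fun_prop

lemma ellipsoidForm_nonneg (a : ι → ℝ) (x : EuclideanSpace ℝ ι) : 0 ≤ ellipsoidForm a x :=
  Finset.sum_nonneg fun _ _ ↦ by positivity

lemma ellipsoidForm_pos (ha : ∀ j, a j ≠ 0) {x : EuclideanSpace ℝ ι} (hx : x ≠ 0) :
    0 < ellipsoidForm a x := by
  obtain ⟨j, hj⟩ : ∃ j, x j ≠ 0 := by
    contrapose! hx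
    exact PiLp.ext hx
  have haj := ha j
  exact Finset.sum_pos' (fun _ _ ↦ by positivity) ⟨j, Finset.mem_univ j, by positivity⟩

lemma ellipsoidForm_smul (a : ι → ℝ) (t : ℝ) (x : EuclideanSpace ℝ ι) :
    ellipsoidForm a (t • x) = t ^ 2 * ellipsoidForm a x := by
  simp only [ellipsoidForm, PiLp.smul_apply, smul_eq_mul, mul_pow, mul_div_assoc, Finset.mul_sum]

lemma ellipsoidForm_smul_rpow (a : ι → ℝ) (s : ℝ) {t : ℝ} (ht : 0 < t)
    (x : EuclideanSpace ℝ ι) :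
    ellipsoidForm a (t • x) ^ (s / 2) = t ^ s * ellipsoidForm a x ^ (s / 2) := by
  rw [ellipsoidForm_smul, mul_rpow (by positivity) (ellipsoidForm_nonneg a x), ← rpow_natCast,
    ← rpow_mul ht.le, Nat.cast_ofNat, mul_div_cancel₀ s two_ne_zero]

lemma integral_exp_neg_ellipsoidForm_mul_sub_one_mul_exp_neg_norm_sq (a : ι → ℝ) {c : ℝ}
    (hc : 0 ≤ c) :
    ∫ x, (exp (-ellipsoidForm a x * c) - 1) * exp (-‖x‖ ^ 2) =
      π ^ ((Fintype.card ι : ℝ) / 2) * ((∏ j, (1 + c / a j ^ 2)) ^ (-(1 : ℝ) / 2) - 1) := by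
  have hpos (j : ι) : 0 < 1 + c / a j ^ 2 := by positivity
  have hexp (x : EuclideanSpace ℝ ι) : (exp (-ellipsoidForm a x * c) - 1) * exp (-‖x‖ ^ 2) =
      exp (-∑ j, (1 + c / a j ^ 2) * x j ^ 2) - exp (-∑ j, 1 * x j ^ 2) := by
    have hform : ellipsoidForm a x * c = ∑ j, c / a j ^ 2 * x j ^ 2 := by
      rw [ellipsoidForm, Finset.sum_mul]
      exact Finset.sum_congr rfl fun j _ ↦ by ring
    simp only [sub_mul, one_mul, ← exp_add, EuclideanSpace.real_norm_sq_eq, neg_mul, hform,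
      add_mul, Finset.sum_add_distrib, neg_add_rev]
  simp only [hexp]
  rw [integral_sub (integrable_exp_neg_sum_mul_sq hpos)
      (integrable_exp_neg_sum_mul_sq fun _ ↦ one_pos),
    integral_exp_neg_sum_mul_sq hpos,
    integral_exp_neg_sum_mul_sq fun _ ↦ one_pos, Finset.prod_const_one, one_rpow]
  ring

variable [Nonempty ι] (a : ι → ℝ) {s i : ℝ}

lemma integral_ellipsoidForm_rpow_mul_exp_neg_norm_sq (hs : 0 < Fintype.card ι + s) :
    ∫ x, ellipsoidForm a x ^ (s / 2) * exp (-‖x‖ ^ 2) =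
      (∫ θ : Metric.sphere (0 : EuclideanSpace ℝ ι) 1, ellipsoidForm a θ ^ (s / 2)
        ∂volume.toSphere) * (1 / 2 * Gamma ((Fintype.card ι + s) / 2)) := by
  rw [← finrank_euclideanSpace (𝕜 := ℝ) (ι := ι)] at hs ⊢
  exact integral_mul_exp_neg_norm_sq_of_homogeneous
    (fun r hr x ↦ ellipsoidForm_smul_rpow a s hr x) hs

lemma integrable_ellipsoidForm_rpow_mul_exp_neg_norm_sq (hs : 0 ≤ s) :
    Integrable fun x ↦ ellipsoidForm a x ^ (s / 2) * exp (-‖x‖ ^ 2) := by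
  have hcont : Continuous fun θ : Metric.sphere (0 : EuclideanSpace ℝ ι) 1 ↦
      ellipsoidForm a θ ^ (s / 2) :=
    ((continuous_ellipsoidForm a).comp continuous_subtype_val).rpow_const
      fun _ ↦ .inr (by positivity)
  exact integrable_mul_exp_neg_norm_sq_of_homogeneous
    (fun r hr x ↦ ellipsoidForm_smul_rpow a s hr x)
    (by rw [finrank_euclideanSpace]; positivity)
    (hcont.integrable_of_hasCompactSupport (.of_compactSpace _))

lemma integral_rpow_mul_prod_one_add_sq_div_rpow_sub_one (hi : -2 < i) (hi₀ : i < 0) :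
    π ^ ((Fintype.card ι : ℝ) / 2) * ∫ u in Ioi (0 : ℝ),
        u ^ (i - 1) * ((∏ j, (1 + u ^ 2 / a j ^ 2)) ^ (-(1 : ℝ) / 2) - 1) =
      1 / 2 * Gamma (i / 2) * ∫ x, ellipsoidForm a x ^ (-i / 2) * exp (-‖x‖ ^ 2) := by
  have hfubini := integral_rpow_mul_integral_exp_neg_mul_rpow_sub_one_mul
    (μ := (volume : Measure (EuclideanSpace ℝ ι))) (w := fun x ↦ exp (-‖x‖ ^ 2)) two_pos
    (by linarith : -2 - 1 < i - 1) (by linarith) (ellipsoidForm_nonneg a)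
    (continuous_ellipsoidForm a).measurable (by fun_prop)
    (by simpa only [sub_add_cancel] using
      integrable_ellipsoidForm_rpow_mul_exp_neg_norm_sq a (neg_pos.2 hi₀).le)
  simpa only [rpow_two, sub_add_cancel,
    integral_exp_neg_ellipsoidForm_mul_sub_one_mul_exp_neg_norm_sq a (sq_nonneg _),
    mul_left_comm _ (π ^ ((Fintype.card ι : ℝ) / 2)), integral_const_mul] using hfubini

theorem integral_sphere_ellipsoidForm_rpow (hi : -2 < i) (hi₀ : i < 0) :
    (∫ θ : Metric.sphere (0 : EuclideanSpace ℝ ι) 1, ellipsoidForm a θ ^ (-i / 2)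
        ∂volume.toSphere) * (Gamma ((Fintype.card ι - i) / 2) * Gamma (i / 2)) =
      4 * π ^ ((Fintype.card ι : ℝ) / 2) * ∫ u in Ioi (0 : ℝ),
        u ^ (i - 1) * ((∏ j, (1 + u ^ 2 / a j ^ 2)) ^ (-(1 : ℝ) / 2) - 1) := by
  have hneg : 0 < -i := neg_pos.2 hi₀
  have hpolar := integral_ellipsoidForm_rpow_mul_exp_neg_norm_sq a (s := -i) (by positivity)
  have hmoment := integral_rpow_mul_prod_one_add_sq_div_rpow_sub_one a hi hi₀
  rw [hpolar, ← sub_eq_add_neg] at hmoment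
  linear_combination -4 * hmoment

end Ellipsoid

lemma mem_ellipsoidSet_iff {n : ℕ} {a : Fin n → ℝ} {x : EuclideanSpace ℝ (Fin n)} :
    x ∈ ellipsoidSet a ↔ ellipsoidForm a x ≤ 1 :=
  Iff.rfl

lemma radial_ellipsoidSet {n : ℕ} {a : Fin n → ℝ} {x : EuclideanSpace ℝ (Fin n)}
    (hx : 0 < ellipsoidForm a x) : radial (ellipsoidSet a) x = (√(ellipsoidForm a x))⁻¹ := by
  have hset : {t : ℝ | 0 ≤ t ∧ t • x ∈ ellipsoidSet a} = Icc 0 (√(ellipsoidForm a x))⁻¹ := by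
    ext t
    refine and_congr_right fun ht ↦ ?_
    rw [mem_ellipsoidSet_iff, ellipsoidForm_smul, ← le_div_iff₀ hx, one_div, ← sqrt_inv,
      le_sqrt ht (by positivity)]
  rw [radial, hset, csSup_Icc (by positivity)]

lemma dualVolume_ellipsoidSet {n : ℕ} {a : Fin n → ℝ} (ha : ∀ j, a j ≠ 0) (i : ℝ) :
    dualVolume n i (ellipsoidSet a) =
      1 / n * ∫ θ : Metric.sphere (0 : EuclideanSpace ℝ (Fin n)) 1,
        ellipsoidForm a θ ^ (-i / 2) ∂sphereMeasure n := by
  rw [dualVolume]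
  congr with θ
  have hθ : 0 < ellipsoidForm a θ := ellipsoidForm_pos ha (ne_zero_of_mem_unit_sphere θ)
  rw [radial_ellipsoidSet hθ, ← sqrt_inv, sqrt_eq_rpow, ← rpow_mul (by positivity),
    inv_rpow hθ.le, ← rpow_neg hθ.le]
  congr 1
  ring

lemma Gamma_ne_zero_of_neg_one_lt {s : ℝ} (hs : -1 < s) (hs₀ : s ≠ 0) : Gamma s ≠ 0 := by
  apply right_ne_zero_of_mul (a := s)
  rw [← Gamma_add_one hs₀]
  exact (Gamma_pos_of_pos (by linarith)).ne'

/-- Moment representation of the dual volume `Ṽ_i` of a centered ellipsoid, for `-2 < i < 0`.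
Here `Real.Gamma` is the Gamma function extended to negative non-integer arguments by the
recursion `Γ(z) = Γ(z+1)/z`. -/
theorem dualVolume_moment_formula_neg
    (n : ℕ) (hn : 0 < n) (a : Fin n → ℝ) (ha : ∀ j, 0 < a j)
    (i : ℝ) (hi0 : -2 < i) (hin : i < 0) :
    dualVolume n i (ellipsoidSet a) =
      4 * Real.pi ^ ((n : ℝ) / 2) /
          (n * Real.Gamma (((n : ℝ) - i) / 2) * Real.Gamma (i / 2)) *
        ∫ u in Ioi (0 : ℝ),
          u ^ (i - 1) * ((∏ j, (1 + u ^ 2 / (a j) ^ 2)) ^ (-(1 : ℝ) / 2) - 1) := by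
  have : Nonempty (Fin n) := Fin.pos_iff_nonempty.1 hn
  have hsphere := integral_sphere_ellipsoidForm_rpow a hi0 hin
  rw [Fintype.card_fin] at hsphere
  have hn' : (0 : ℝ) < n := Nat.cast_pos.2 hn
  have hGamma : Gamma ((n - i) / 2) ≠ 0 := (Gamma_pos_of_pos (by linarith)).ne'
  have hGamma' : Gamma (i / 2) ≠ 0 := Gamma_ne_zero_of_neg_one_lt (by linarith) (by linarith)
  rw [dualVolume_ellipsoidSet (fun j ↦ (ha j).ne') i, sphereMeasure]
  rw [div_mul_eq_mul_div (4 * _), ← hsphere]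
  field_simp
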